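/- arXiv:2401.00351 — 5 statements merged into one kernel-verified Lean document; each statement's English description precedes it below -/
import Mathlib

section
/- Fix integers p, m ≥ 0 with p + m ≥ 1 and bounds L, M ∈ ℕ. For each n, let A_n ∈ 𝔇(p, m, n) be a matrix with all entries at most L, and let β_n = (β_{n,1}, …, β_{n,n}) be a vector of nonnegative integers with all entries at most M, such that Σ_{j=1}^n β_{n,j} is even and the number s_n of indices j ∈ {1, …, n} with β_{n,j} ≠ (deg A_n)_j satisfies s_n = o(n). Then for every sufficiently large n there exists A'_n ∈ 𝔇(p, m, n) such that deg A'_n = β_n, all entries of A'_n are at most M, and the number of columns in which A'_n differs from A_n is o(n) as n → ∞. -/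
open Filter

/-- The set `𝔇(p, m, n)`: `(p + 2m) × n` matrices with nonnegative integer entries
(rows indexed by `Fin (p + 2m)`, 0-based: rows `0, …, p-1` are the first `p` rows)
such that each of the first `p` row sums is even, and for each `k < m` the row sums
of rows `p + 2k` and `p + 2k + 1` coincide. -/
def memD (p m n : ℕ) (A : Fin (p + 2 * m) → Fin n → ℕ) : Prop :=
  (∀ i : ℕ, (hi : i < p) → Even (∑ j, A ⟨i, by omega⟩ j)) ∧
  (∀ k : ℕ, (hk : k < m) →
    ∑ j, A ⟨p + 2 * k, by omega⟩ j = ∑ j, A ⟨p + 2 * k + 1, by omega⟩ j)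

/-- The `j`-th column sum of a matrix, i.e. `(deg A)_j`. -/
def colSum {r n : ℕ} (A : Fin r → Fin n → ℕ) (j : Fin n) : ℕ := ∑ i, A i j

def inG (p m : ℕ) : Fin p ⊕ Fin m → ℕ → Prop
  | Sum.inl i, a => a = i.1
  | Sum.inr k, a => a = p + 2 * k.1 ∨ a = p + 2 * k.1 + 1

def defect (p m : ℕ) (F : ℕ → ℕ) : Fin p ⊕ Fin m → ℕ
  | Sum.inl i => F i.1 % 2
  | Sum.inr k => (F (p + 2 * k.1) - F (p + 2 * k.1 + 1)) + (F (p + 2 * k.1 + 1) - F (p + 2 * k.1))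

theorem inG_inj {p m : ℕ} {g h : Fin p ⊕ Fin m} {a : ℕ} (hg : inG p m g a) (hh : inG p m h a) :
    g = h := by
  rcases g with i | k <;> rcases h with i' | k' <;> simp only [inG] at hg hh
  · congr 1; ext; omega
  · have := i.2; omega
  · have := i'.2; omega
  · congr 1; ext; omega

theorem inG_lt {p m : ℕ} {g : Fin p ⊕ Fin m} {a : ℕ} (hg : inG p m g a) : a < p + 2 * m := by
  rcases g with i | k <;> simp only [inG] at hg
  · have := i.2; omega
  · have := k.2; omega

theorem defect_congr {p m : ℕ} {F F' : ℕ → ℕ} {g : Fin p ⊕ Fin m}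
    (h : ∀ x, inG p m g x → F' x = F x) : defect p m F' g = defect p m F g := by
  rcases g with i | k <;> simp only [defect, inG] at *
  · rw [h _ rfl]
  · rw [h _ (Or.inl rfl), h _ (Or.inr rfl)]

theorem giver {p m : ℕ} {F : ℕ → ℕ} {g : Fin p ⊕ Fin m} (h : defect p m F g ≠ 0) :
    ∃ a, inG p m g a ∧ 0 < F a ∧ ∀ F' : ℕ → ℕ,
      (∀ x, inG p m g x → F' x + (if x = a then 1 else 0) = F x) →
      defect p m F' g < defect p m F g := by
  rcases g with i | k <;> simp only [defect, inG] at *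
  · refine ⟨i.1, rfl, by omega, fun F' hF => ?_⟩
    have := hF _ rfl
    simp at this
    omega
  · by_cases hlt : F (p + 2 * k.1) < F (p + 2 * k.1 + 1)
    · refine ⟨p + 2 * k.1 + 1, Or.inr rfl, by omega, fun F' hF => ?_⟩
      have h1 := hF _ (Or.inl rfl)
      have h2 := hF _ (Or.inr rfl)
      simp at h1 h2
      omega
    · refine ⟨p + 2 * k.1, Or.inl rfl, by omega, fun F' hF => ?_⟩
      have h1 := hF _ (Or.inl rfl)
      have h2 := hF _ (Or.inr rfl)
      simp at h1 h2
      omega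

theorem taker {p m : ℕ} {F : ℕ → ℕ} {g : Fin p ⊕ Fin m} (h : defect p m F g ≠ 0) :
    ∃ b, inG p m g b ∧ ∀ F' : ℕ → ℕ,
      (∀ x, inG p m g x → F' x = F x + (if x = b then 1 else 0)) →
      defect p m F' g < defect p m F g := by
  rcases g with i | k <;> simp only [defect, inG] at *
  · refine ⟨i.1, rfl, fun F' hF => ?_⟩
    have := hF _ rfl
    simp at this
    omega
  · by_cases hlt : F (p + 2 * k.1) < F (p + 2 * k.1 + 1)
    · refine ⟨p + 2 * k.1, Or.inl rfl, fun F' hF => ?_⟩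
      have h1 := hF _ (Or.inl rfl)
      have h2 := hF _ (Or.inr rfl)
      simp at h1 h2
      omega
    · refine ⟨p + 2 * k.1 + 1, Or.inr rfl, fun F' hF => ?_⟩
      have h1 := hF _ (Or.inl rfl)
      have h2 := hF _ (Or.inr rfl)
      simp at h1 h2
      omega

theorem within {p m : ℕ} {F : ℕ → ℕ} {g : Fin p ⊕ Fin m} (h : 2 ≤ defect p m F g) :
    ∃ a b, inG p m g a ∧ inG p m g b ∧ a ≠ b ∧ 0 < F a ∧ ∀ F' : ℕ → ℕ,
      (∀ x, F' x + (if x = a then 1 else 0) = F x + (if x = b then 1 else 0)) →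
      defect p m F' g < defect p m F g := by
  rcases g with i | k <;> simp only [defect, inG] at *
  · omega
  · by_cases hlt : F (p + 2 * k.1) < F (p + 2 * k.1 + 1)
    · refine ⟨p + 2 * k.1 + 1, p + 2 * k.1, Or.inr rfl, Or.inl rfl, by omega, by omega,
        fun F' hF => ?_⟩
      have h1 := hF (p + 2 * k.1)
      have h2 := hF (p + 2 * k.1 + 1)
      simp at h1 h2
      omega
    · refine ⟨p + 2 * k.1, p + 2 * k.1 + 1, Or.inl rfl, Or.inr rfl, by omega, by omega,
        fun F' hF => ?_⟩
      have h1 := hF (p + 2 * k.1)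
      have h2 := hF (p + 2 * k.1 + 1)
      simp at h1 h2
      omega

theorem step {p m : ℕ} {F : ℕ → ℕ} (he : Even (∑ g, defect p m F g))
    (h0 : ∑ g, defect p m F g ≠ 0) :
    ∃ a b, a < p + 2 * m ∧ b < p + 2 * m ∧ a ≠ b ∧ 0 < F a ∧ ∀ F' : ℕ → ℕ,
      (∀ x, F' x + (if x = a then 1 else 0) = F x + (if x = b then 1 else 0)) →
      ∑ g, defect p m F' g < ∑ g, defect p m F g := by
  by_cases hbig : ∃ g, 2 ≤ defect p m F g
  · obtain ⟨g, hg⟩ := hbig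
    obtain ⟨a, b, ha, hb, hab, hpos, H⟩ := within hg
    refine ⟨a, b, inG_lt ha, inG_lt hb, hab, hpos, fun F' hF => ?_⟩
    refine Finset.sum_lt_sum (fun x _ => ?_) ⟨g, Finset.mem_univ _, H F' hF⟩
    by_cases hx : x = g
    · subst hx; exact (H F' hF).le
    · refine (defect_congr fun y hy => ?_).le
      have h1 : y ≠ a := by rintro rfl; exact hx (inG_inj hy ha)
      have h2 : y ≠ b := by rintro rfl; exact hx (inG_inj hy hb)
      simpa [h1, h2] using hF y
  · push Not at hbig
    obtain ⟨g, -, hg⟩ := Finset.exists_ne_zero_of_sum_ne_zero h0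
    have hh : ∃ h, h ≠ g ∧ defect p m F h ≠ 0 := by
      by_contra! hc
      rw [Fintype.sum_eq_single g hc] at he
      have := hbig g
      rcases he with ⟨r, hr⟩
      omega
    obtain ⟨h, hhg, hh⟩ := hh
    obtain ⟨a, ha, hpos, H⟩ := giver hg
    obtain ⟨b, hb, K⟩ := taker hh
    have hab : a ≠ b := by rintro rfl; exact hhg (inG_inj hb ha)
    refine ⟨a, b, inG_lt ha, inG_lt hb, hab, hpos, fun F' hF => ?_⟩
    have H' : defect p m F' g < defect p m F g := by
      apply H
      intro y hy
      have h2 : y ≠ b := by rintro rfl; exact hhg (inG_inj hb hy)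
      simpa [h2] using hF y
    have K' : defect p m F' h < defect p m F h := by
      apply K
      intro y hy
      have h2 : y ≠ a := by rintro rfl; exact hhg (inG_inj hy ha)
      simpa [h2] using hF y
    refine Finset.sum_lt_sum (fun x _ => ?_) ⟨g, Finset.mem_univ _, H'⟩
    by_cases hx : x = g
    · subst hx; exact H'.le
    by_cases hx' : x = h
    · subst hx'; exact K'.le
    · refine (defect_congr fun y hy => ?_).le
      have h1 : y ≠ a := by rintro rfl; exact hx (inG_inj hy ha)
      have h2 : y ≠ b := by rintro rfl; exact hx' (inG_inj hy hb)
      simpa [h1, h2] using hF y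

theorem sum_split (p m : ℕ) (F : ℕ → ℕ) :
    ∑ x ∈ Finset.range (p + 2 * m), F x =
      ∑ i ∈ Finset.range p, F i +
      ∑ k ∈ Finset.range m, (F (p + 2 * k) + F (p + 2 * k + 1)) := by
  induction m with
  | zero => simp
  | succ m ih =>
    rw [show p + 2 * (m + 1) = p + 2 * m + 1 + 1 by ring, Finset.sum_range_succ,
      Finset.sum_range_succ, ih, Finset.sum_range_succ]
    ring

theorem even_defect {p m : ℕ} {F : ℕ → ℕ} (h : Even (∑ x ∈ Finset.range (p + 2 * m), F x)) :
    Even (∑ g, defect p m F g) := by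
  rw [sum_split, Finset.sum_range, Finset.sum_range] at h
  rw [Fintype.sum_sum_type]
  rw [← ZMod.natCast_eq_zero_iff_even] at h ⊢
  rw [← h]
  push_cast
  congr 1
  · refine Finset.sum_congr rfl fun i _ => ?_
    simp [defect]
  · refine Finset.sum_congr rfl fun k _ => ?_
    rw [← Nat.cast_add, ZMod.natCast_eq_natCast_iff]
    simp only [defect, Nat.ModEq]
    omega

/-- Row sums, extended by zero. -/
def rowF {r n : ℕ} (A : Fin r → Fin n → ℕ) (x : ℕ) : ℕ :=
  if h : x < r then ∑ j, A ⟨x, h⟩ j else 0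

theorem sum_rowF {r n : ℕ} (A : Fin r → Fin n → ℕ) :
    ∑ x ∈ Finset.range r, rowF A x = ∑ j, colSum A j := by
  rw [Finset.sum_range]
  simp only [rowF, colSum, Fin.is_lt, dite_true]
  exact Finset.sum_comm

theorem memD_of_defect {p m n : ℕ} {A : Fin (p + 2 * m) → Fin n → ℕ}
    (h : ∑ g, defect p m (rowF A) g = 0) : memD p m n A := by
  have h' : ∀ g, defect p m (rowF A) g = 0 := by simpa using h
  constructor
  · intro i hi
    have := h' (Sum.inl ⟨i, hi⟩)
    simp only [defect, rowF] at this
    rw [dif_pos (by omega)] at this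
    exact Nat.even_iff.2 this
  · intro k hk
    have := h' (Sum.inr ⟨k, hk⟩)
    simp only [defect, rowF] at this
    rw [dif_pos (by omega), dif_pos (by omega)] at this
    omega

theorem move {r n : ℕ} (A : Fin r → Fin n → ℕ) {a b : ℕ} (ha : a < r) (hb : b < r) (hab : a ≠ b)
    (hpos : 0 < rowF A a) :
    ∃ (j₀ : Fin n) (A' : Fin r → Fin n → ℕ), (∀ j, colSum A' j = colSum A j) ∧
      (∀ i j, j ≠ j₀ → A' i j = A i j) ∧
      (∀ x, rowF A' x + (if x = a then 1 else 0) = rowF A x + (if x = b then 1 else 0)) := by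
  rw [rowF, dif_pos ha] at hpos
  obtain ⟨j₀, -, hj⟩ := Finset.exists_ne_zero_of_sum_ne_zero hpos.ne'
  let A' : Fin r → Fin n → ℕ := fun i j =>
    if j = j₀ then A i j + (if i.1 = b then 1 else 0) - (if i.1 = a then 1 else 0) else A i j
  have key : ∀ i j, A' i j + (if j = j₀ then (if i.1 = a then 1 else 0) else 0)
      = A i j + (if j = j₀ then (if i.1 = b then 1 else 0) else 0) := by
    intro i j
    simp only [A']
    by_cases h1 : j = j₀
    · subst h1
      by_cases h2 : i.1 = a
      · have : i = ⟨a, ha⟩ := Fin.ext h2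
        subst this
        simp [hab]
        omega
      · simp [h2]
    · simp [h1]
  refine ⟨j₀, A', fun j => ?_, fun i j h => by simp [A', h], fun x => ?_⟩
  · have := Finset.sum_congr (rfl : (Finset.univ : Finset (Fin r)) = _) fun i _ => key i j
    rw [Finset.sum_add_distrib, Finset.sum_add_distrib] at this
    have e : ∀ c, c < r → ∑ i : Fin r, (if j = j₀ then (if i.1 = c then 1 else 0) else 0)
        = if j = j₀ then 1 else 0 := by
      intro c hc
      split_ifs
      · rw [Fintype.sum_eq_single ⟨c, hc⟩]
        · simp
        · intro y hy
          rw [if_neg]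
          intro h; exact hy (Fin.ext h)
      · simp
    rw [e a ha, e b hb] at this
    simpa [colSum] using this
  · by_cases hx : x < r
    · have := Finset.sum_congr (rfl : (Finset.univ : Finset (Fin n)) = _) fun j _ => key ⟨x, hx⟩ j
      rw [Finset.sum_add_distrib, Finset.sum_add_distrib] at this
      simpa [rowF, hx] using this
    · have h1 : x ≠ a := by omega
      have h2 : x ≠ b := by omega
      simp [rowF, hx, h1, h2]

theorem fix_up {p m n : ℕ} (N : ℕ) : ∀ A : Fin (p + 2 * m) → Fin n → ℕ,
    Even (∑ j, colSum A j) → ∑ g, defect p m (rowF A) g ≤ N →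
    ∃ (A' : Fin (p + 2 * m) → Fin n → ℕ) (S : Finset (Fin n)), memD p m n A' ∧
      (∀ j, colSum A' j = colSum A j) ∧ S.card ≤ N ∧ ∀ j, j ∉ S → ∀ i, A' i j = A i j := by
  induction N with
  | zero =>
    intro A _ h
    exact ⟨A, ∅, memD_of_defect (by omega), fun _ => rfl, by simp, fun _ _ _ => rfl⟩
  | succ N ih =>
    intro A he h
    by_cases h0 : ∑ g, defect p m (rowF A) g = 0
    · exact ⟨A, ∅, memD_of_defect h0, fun _ => rfl, by simp, fun _ _ _ => rfl⟩
    obtain ⟨a, b, ha, hb, hab, hpos, H⟩ := step (even_defect (by rwa [sum_rowF])) h0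
    obtain ⟨j₀, A₁, hc, hj, hr⟩ := move A ha hb hab hpos
    have := H _ hr
    obtain ⟨A', S, h1, h2, h3, h4⟩ := ih A₁ (by simpa [hc] using he) (by omega)
    refine ⟨A', insert j₀ S, h1, fun j => (h2 j).trans (hc j), ?_, ?_⟩
    · exact (Finset.card_insert_le _ _).trans (by omega)
    · intro j hjS i
      rw [Finset.mem_insert, not_or] at hjS
      rw [h4 j hjS.2, hj _ _ hjS.1]

theorem finite_mod (p m L M n : ℕ) (hpm : 1 ≤ p + m)
    (A : Fin (p + 2 * m) → Fin n → ℕ) (β : Fin n → ℕ)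
    (hA : memD p m n A) (hAL : ∀ i j, A i j ≤ L) (hβM : ∀ j, β j ≤ M)
    (hβeven : Even (∑ j, β j)) :
    ∃ A' : Fin (p + 2 * m) → Fin n → ℕ,
      (memD p m n A' ∧ (∀ j, colSum A' j = β j) ∧ ∀ i j, A' i j ≤ M) ∧
      (Finset.univ.filter fun j : Fin n => ∃ i, A' i j ≠ A i j).card ≤
        (1 + (p + m) * (2 * (L + M))) *
          (Finset.univ.filter fun j : Fin n => β j ≠ colSum A j).card := by
  classical
  set B := Finset.univ.filter fun j : Fin n => β j ≠ colSum A j with hB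
  let A₀ : Fin (p + 2 * m) → Fin n → ℕ := fun i j =>
    if j ∈ B then (if i.1 = 0 then β j else 0) else A i j
  have hcol : ∀ j, colSum A₀ j = β j := by
    intro j
    by_cases hj : j ∈ B
    · simp only [colSum, A₀, hj, if_true]
      rw [Fintype.sum_eq_single ⟨0, by omega⟩]
      · simp
      · intro y hy
        rw [if_neg]
        intro h; exact hy (Fin.ext h)
    · simp only [colSum, A₀, hj, if_false]
      simp only [hB, Finset.mem_filter, Finset.mem_univ, true_and, not_not] at hj
      exact hj.symm
  have hsum : ∀ (C : Fin n → ℕ), (∑ j, if j ∈ B then C j else 0) = ∑ j ∈ B, C j := by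
    intro C; simp
  have hle : ∀ (C D : Fin n → ℕ) (K : ℕ), (∀ j, C j ≤ K) → (∀ j, j ∉ B → C j = D j) →
      ∑ j, C j ≤ ∑ j, D j + B.card * K := by
    intro C D K h1 h2
    have : ∑ j, C j ≤ ∑ j, (D j + if j ∈ B then K else 0) := by
      apply Finset.sum_le_sum
      intro j _
      by_cases hj : j ∈ B
      · simp [hj]; have := h1 j; omega
      · simp [hj, h2 j hj]
    rw [Finset.sum_add_distrib, hsum] at this
    simpa using this
  have hA0M : ∀ i j, A₀ i j ≤ L + M := by
    intro i j
    have := hAL i j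
    have := hβM j
    simp only [A₀]
    split_ifs <;> omega
  have hA0 : ∀ i j, j ∉ B → A₀ i j = A i j := by
    intro i j hj
    simp [A₀, hj]
  have hr1 : ∀ x, rowF A₀ x ≤ rowF A x + B.card * (L + M) := by
    intro x
    simp only [rowF]
    split_ifs with h
    · exact hle _ _ _ (hA0M _) (hA0 _)
    · simp
  have hr2 : ∀ x, rowF A x ≤ rowF A₀ x + B.card * (L + M) := by
    intro x
    simp only [rowF]
    split_ifs with h
    · exact hle _ _ _ (fun j => (hAL _ j).trans (by omega)) (fun j hj => (hA0 _ j hj).symm)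
    · simp
  have hdef : ∑ g, defect p m (rowF A₀) g ≤ (p + m) * (2 * (L + M)) * B.card := by
    have : ∑ g, defect p m (rowF A₀) g ≤
        ∑ _g : Fin p ⊕ Fin m, 2 * (B.card * (L + M)) := by
      apply Finset.sum_le_sum
      rintro (i | k) _
      · have h1 := hr1 i.1
        have h2 := hr2 i.1
        have h3 := hA.1 i.1 i.2
        have h4 : rowF A i.1 % 2 = 0 := by
          rw [rowF, dif_pos (by have := i.2; omega)]
          exact Nat.even_iff.1 h3
        simp only [defect]
        omega
      · have h1 := hr1 (p + 2 * k.1)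
        have h2 := hr2 (p + 2 * k.1)
        have h3 := hr1 (p + 2 * k.1 + 1)
        have h4 := hr2 (p + 2 * k.1 + 1)
        have h5 : rowF A (p + 2 * k.1) = rowF A (p + 2 * k.1 + 1) := by
          have := k.2
          rw [rowF, rowF, dif_pos (by omega), dif_pos (by omega)]
          exact hA.2 k.1 k.2
        simp only [defect]
        omega
    refine this.trans (le_of_eq ?_)
    simp
    ring
  obtain ⟨A', S, h1, h2, h3, h4⟩ := fix_up _ A₀ (by simpa [hcol] using hβeven) hdef
  refine ⟨A', ⟨h1, fun j => (h2 j).trans (hcol j), fun i j => ?_⟩, ?_⟩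
  · refine le_trans ?_ (hβM j)
    rw [← hcol j, ← h2 j]
    exact Finset.single_le_sum (f := fun i => A' i j) (fun _ _ => Nat.zero_le _)
      (Finset.mem_univ i)
  · have hsub : (Finset.univ.filter fun j : Fin n => ∃ i, A' i j ≠ A i j) ⊆ B ∪ S := by
      intro j hj
      simp only [Finset.mem_filter, Finset.mem_univ, true_and] at hj
      by_contra hc
      rw [Finset.mem_union, not_or] at hc
      obtain ⟨i, hi⟩ := hj
      exact hi ((h4 j hc.2 i).trans (hA0 i j hc.1))
    calc _ ≤ (B ∪ S).card := Finset.card_le_card hsub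
      _ ≤ B.card + S.card := Finset.card_union_le _ _
      _ ≤ _ := by rw [add_mul, one_mul]; omega

/-- **Modification of colored degree matrices (general case).**
Given `A_n ∈ 𝔇(p, m, n)` with entries at most `L` and target column sums `β_n` with
entries at most `M`, even total sum, disagreeing with `deg A_n` in only `o(n)` columns,
one can find, for all sufficiently large `n`, a matrix `A'_n ∈ 𝔇(p, m, n)` with
`deg A'_n = β_n`, entries at most `M`, differing from `A_n` in only `o(n)` columns. -/
theorem colored_degree_modification (p m L M : ℕ) (hpm : 1 ≤ p + m)
    (A : (n : ℕ) → Fin (p + 2 * m) → Fin n → ℕ)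
    (β : (n : ℕ) → Fin n → ℕ)
    (hA : ∀ n, memD p m n (A n))
    (hAL : ∀ n i j, A n i j ≤ L)
    (hβM : ∀ n j, β n j ≤ M)
    (hβeven : ∀ n, Even (∑ j, β n j))
    (hs : Tendsto
      (fun n => ((Finset.univ.filter fun j : Fin n => β n j ≠ colSum (A n) j).card : ℝ) / n)
      atTop (nhds 0)) :
    ∃ A' : (n : ℕ) → Fin (p + 2 * m) → Fin n → ℕ,
      (∀ᶠ n in atTop,
        memD p m n (A' n) ∧ (∀ j, colSum (A' n) j = β n j) ∧ ∀ i j, A' n i j ≤ M) ∧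
      Tendsto
        (fun n => ((Finset.univ.filter fun j : Fin n => ∃ i, A' n i j ≠ A n i j).card : ℝ) / n)
        atTop (nhds 0) := by
  have H := fun n => finite_mod p m L M n hpm (A n) (β n) (hA n) (hAL n) (hβM n) (hβeven n)
  choose A' h1 h2 using H
  refine ⟨A', Eventually.of_forall h1, ?_⟩
  have hs' := hs.const_mul ((1 + (p + m) * (2 * (L + M)) : ℕ) : ℝ)
  rw [mul_zero] at hs'
  refine squeeze_zero (fun n => by positivity) (fun n => ?_) hs'
  rw [← mul_div_assoc]
  gcongr
  exact_mod_cast h2 n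
end

section
/- Fix bounds L, M ∈ ℕ. For each n, let A_n be a 2 × n matrix with nonnegative integer entries at most L whose two row sums are equal, and let β_n = (β_{n,1}, …, β_{n,n}) be a vector of nonnegative integers with all entries at most M, such that Σ_{j=1}^n β_{n,j} is even and the number of indices j with β_{n,j} different from the j-th column sum of A_n is o(n). Then for every sufficiently large n there exists a 2 × n matrix A'_n with nonnegative integer entries whose two row sums are equal, whose j-th column sum equals β_{n,j} for every j ∈ {1, …, n}, whose entries are all at most M, and which differs from A_n in only o(n) columns as n → ∞. -/
open Filter

lemma adjust_sum {n : ℕ} (b : Fin n → ℕ) (T : ℕ) (hT : T ≤ ∑ j, b j) (k : ℕ) :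
    ∀ x : Fin n → ℕ, (∀ j, x j ≤ b j) → ∑ j, x j ≤ T + k → T ≤ ∑ j, x j + k →
    ∃ y : Fin n → ℕ, (∀ j, y j ≤ b j) ∧ ∑ j, y j = T ∧
      (Finset.univ.filter fun j => y j ≠ x j).card ≤ k := by
  induction k with
  | zero =>
    intro x hx h1 h2
    exact ⟨x, hx, by omega, by simp⟩
  | succ k ih =>
    intro x hx h1 h2
    have key : ∀ (j : Fin n) (v : ℕ), v ≤ b j →
        (∑ i, Function.update x j v i ≤ T + k) → (T ≤ ∑ i, Function.update x j v i + k) →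
        ∃ y : Fin n → ℕ, (∀ j, y j ≤ b j) ∧ ∑ j, y j = T ∧
          (Finset.univ.filter fun j => y j ≠ x j).card ≤ k + 1 := by
      intro j v hv h3 h4
      obtain ⟨y, hy, hs, hc⟩ := ih (Function.update x j v) (by
        intro i
        by_cases h : i = j
        · subst h; simpa using hv
        · simpa [h] using hx i) h3 h4
      refine ⟨y, hy, hs, ?_⟩
      refine le_trans (Finset.card_le_card (t := insert j
        (Finset.univ.filter fun i => y i ≠ Function.update x j v i)) ?_)
        (le_trans (Finset.card_insert_le _ _) (by omega))
      intro i hi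
      by_cases h : i = j
      · simp [h]
      · simpa [h] using hi
    have hupd : ∀ (j : Fin n) (v : ℕ), ∑ i, Function.update x j v i + x j = ∑ i, x i + v := by
      intro j v
      rw [Finset.sum_update_of_mem (Finset.mem_univ j),
        ← Finset.add_sum_erase _ x (Finset.mem_univ j), Finset.sdiff_singleton_eq_erase]
      ring
    rcases lt_trichotomy (∑ j, x j) T with h | h | h
    · obtain ⟨j, -, hj⟩ := Finset.exists_lt_of_sum_lt (lt_of_lt_of_le h hT)
      have := hupd j (x j + 1)
      exact key j (x j + 1) hj (by omega) (by omega)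
    · exact ⟨x, hx, h, by simp⟩
    · obtain ⟨j, -, hj⟩ : ∃ j ∈ Finset.univ, x j ≠ 0 :=
        Finset.exists_ne_zero_of_sum_ne_zero (by omega)
      have := hupd j (x j - 1)
      exact key j (x j - 1) (by have := hx j; omega) (by omega) (by omega)

lemma fix_one (L M n : ℕ) (A : Fin 2 → Fin n → ℕ) (b : Fin n → ℕ)
    (hrow : ∑ j, A 0 j = ∑ j, A 1 j) (hAL : ∀ i j, A i j ≤ L) (hb : ∀ j, b j ≤ M)
    (heven : Even (∑ j, b j)) :
    ∃ A' : Fin 2 → Fin n → ℕ, ((∑ j, A' 0 j = ∑ j, A' 1 j) ∧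
        (∀ j, A' 0 j + A' 1 j = b j) ∧ ∀ i j, A' i j ≤ M) ∧
      (Finset.univ.filter fun j : Fin n => ∃ i, A' i j ≠ A i j).card ≤
        (M + L + 1) * (Finset.univ.filter fun j : Fin n => b j ≠ A 0 j + A 1 j).card := by
  obtain ⟨T, hT⟩ := heven
  set S := Finset.univ.filter fun j : Fin n => b j ≠ A 0 j + A 1 j with hS
  set x : Fin n → ℕ := fun j => min (A 0 j) (b j) with hx
  have hbound : ∀ j, 2 * x j + A 1 j ≤ b j + A 0 j + (if j ∈ S then M + L else 0) ∧
      b j + A 0 j ≤ 2 * x j + A 1 j + (if j ∈ S then M + L else 0) := by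
    intro j
    have h0 := hAL 0 j
    have h1 := hAL 1 j
    have h2 := hb j
    by_cases h : b j = A 0 j + A 1 j
    · simp only [hx, hS, Finset.mem_filter]
      simp only [h, ne_eq, not_true, and_false, if_false]
      omega
    · simp only [hx, hS, Finset.mem_filter]
      simp only [h, ne_eq, not_false_eq_true, Finset.mem_univ, and_true, if_true]
      omega
  have hsum : ∑ j, (if j ∈ S then M + L else 0) = (M + L) * S.card := by
    simp [Finset.sum_ite_mem, mul_comm]
  have e1 := Finset.sum_le_sum fun j (_ : j ∈ Finset.univ) => (hbound j).1
  have e2 := Finset.sum_le_sum fun j (_ : j ∈ Finset.univ) => (hbound j).2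
  simp only [Finset.sum_add_distrib, ← Finset.mul_sum, hsum] at e1 e2
  obtain ⟨y, hy, hyT, hyc⟩ := adjust_sum b T (by omega) ((M + L) * S.card) x
    (fun j => min_le_right _ _) (by omega) (by omega)
  have hz : ∑ j, y j + ∑ j, (b j - y j) = ∑ j, b j := by
    rw [← Finset.sum_add_distrib]
    exact Finset.sum_congr rfl fun j _ => by have := hy j; omega
  refine ⟨![y, fun j => b j - y j], ⟨?_, ?_, ?_⟩, ?_⟩
  · simp only [Matrix.cons_val_zero, Matrix.cons_val_one]
    omega
  · intro j
    have := hy j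
    simp only [Matrix.cons_val_zero, Matrix.cons_val_one]
    omega
  · intro i j
    have := hy j
    have := hb j
    fin_cases i
    · change y j ≤ M
      omega
    · change b j - y j ≤ M
      omega
  · refine le_trans (Finset.card_le_card
      (t := (Finset.univ.filter fun j => y j ≠ x j) ∪ S) ?_)
      (le_trans (Finset.card_union_le _ _) (by linarith))
    intro j hj
    simp only [Finset.mem_filter, Finset.mem_univ, true_and] at hj
    by_contra hcon
    simp only [hS, Finset.mem_union, Finset.mem_filter, Finset.mem_univ, true_and, not_or,
      not_not, hx] at hcon
    obtain ⟨i, hi⟩ := hj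
    apply hi
    fin_cases i
    · change y j = A 0 j
      omega
    · change b j - y j = A 1 j
      omega

/-- **Modification of 2-row degree matrices (the case `p = 0`, `m = 1`).**
Given `2 × n` matrices `A_n` with entries at most `L` and equal row sums, and target
column sums `β_n` with entries at most `M`, even total sum, and disagreeing with the
column sums of `A_n` in only `o(n)` columns, one can find, for all sufficiently large
`n`, a `2 × n` matrix `A'_n` with equal row sums, column sums `β_n`, entries at most
`M`, differing from `A_n` in only `o(n)` columns. -/
theorem two_row_degree_modification (L M : ℕ)
    (A : (n : ℕ) → Fin 2 → Fin n → ℕ)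
    (β : (n : ℕ) → Fin n → ℕ)
    (hArow : ∀ n, ∑ j, A n 0 j = ∑ j, A n 1 j)
    (hAL : ∀ n i j, A n i j ≤ L)
    (hβM : ∀ n j, β n j ≤ M)
    (hβeven : ∀ n, Even (∑ j, β n j))
    (hs : Tendsto
      (fun n => ((Finset.univ.filter fun j : Fin n => β n j ≠ A n 0 j + A n 1 j).card : ℝ) / n)
      atTop (nhds 0)) :
    ∃ A' : (n : ℕ) → Fin 2 → Fin n → ℕ,
      (∀ᶠ n in atTop,
        (∑ j, A' n 0 j = ∑ j, A' n 1 j) ∧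
        (∀ j, A' n 0 j + A' n 1 j = β n j) ∧
        ∀ i j, A' n i j ≤ M) ∧
      Tendsto
        (fun n => ((Finset.univ.filter fun j : Fin n => ∃ i, A' n i j ≠ A n i j).card : ℝ) / n)
        atTop (nhds 0) := by
  choose A' h1 h2 using fun n => fix_one L M n (A n) (β n) (hArow n) (hAL n) (hβM n) (hβeven n)
  refine ⟨A', Eventually.of_forall h1, ?_⟩
  have hlim := hs.const_mul ((M : ℝ) + L + 1)
  rw [mul_zero] at hlim
  refine squeeze_zero (fun n => by positivity) (fun n => ?_) hlim
  rw [← mul_div_assoc]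
  refine div_le_div_of_nonneg_right ?_ (Nat.cast_nonneg n)
  exact_mod_cast h2 n
end

section
/- Let n ≥ 1 and L, M ∈ ℕ. Let A = (a_{i,j}) be a 2 × n matrix with nonnegative integer entries at most L whose two row sums are equal, and let β = (β_1, …, β_n) be nonnegative integers with all entries at most M and Σ_{j=1}^n β_j even. Let α_j denote the j-th column sum of A, set I = {j : β_j ≠ α_j}, and assume 1 ∉ I. Then there exists a 2 × n matrix B with nonnegative integer entries whose two row sums are equal, which agrees with A on every column outside I ∪ {1}, and whose vector of column sums is (β_1 + r, β_2, …, β_n) for some even integer r with 0 ≤ r ≤ (2L + M)(|I| + 1). -/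
/-- **Step 1: moving the excess to the first column.**
For a `2 × n` matrix `A` with entries at most `L` and equal row sums, and a target
vector `β` with entries at most `M` and even total sum such that the first column is
not in the disagreement set `I = {j : β j ≠ (deg A)_j}`, there is a `2 × n` matrix `B`
with equal row sums, agreeing with `A` outside `I ∪ {first column}`, whose column sums
are `(β_1 + r, β_2, …, β_n)` for some even `r ≤ (2L + M)(|I| + 1)`. -/
theorem move_excess_to_first_column (n : ℕ) (hn : 0 < n) (L M : ℕ)
    (A : Fin 2 → Fin n → ℕ)
    (hAL : ∀ i j, A i j ≤ L)
    (hArow : ∑ j, A 0 j = ∑ j, A 1 j)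
    (β : Fin n → ℕ)
    (hβM : ∀ j, β j ≤ M)
    (hβeven : Even (∑ j, β j))
    (I : Finset (Fin n))
    (hI : I = Finset.univ.filter fun j => β j ≠ A 0 j + A 1 j)
    (h1 : (⟨0, hn⟩ : Fin n) ∉ I) :
    ∃ B : Fin 2 → Fin n → ℕ, ∃ r : ℕ,
      (∑ j, B 0 j = ∑ j, B 1 j) ∧
      (∀ j, j ∉ I ∪ {(⟨0, hn⟩ : Fin n)} → ∀ i, B i j = A i j) ∧
      Even r ∧ r ≤ (2 * L + M) * (I.card + 1) ∧
      B 0 ⟨0, hn⟩ + B 1 ⟨0, hn⟩ = β ⟨0, hn⟩ + r ∧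
      (∀ j, j ≠ (⟨0, hn⟩ : Fin n) → B 0 j + B 1 j = β j) := by
  classical
  set z : Fin n := ⟨0, hn⟩ with hz
  obtain ⟨P, hP⟩ : ∃ P, P = ∑ j, (if j ∈ I then A 0 j else 0) := ⟨_, rfl⟩
  obtain ⟨Q, hQ⟩ : ∃ Q, Q = ∑ j, (if j ∈ I then A 1 j else 0) := ⟨_, rfl⟩
  obtain ⟨R, hR⟩ : ∃ R, R = ∑ j, (if j ∈ I then β j else 0) := ⟨_, rfl⟩
  have hmem : ∀ j, j ∉ I → β j = A 0 j + A 1 j := by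
    intro j hj
    by_contra h
    exact hj (by rw [hI]; simp [h])
  have hPb : P ≤ I.card * L := by
    rw [hP, ← Finset.sum_filter, Finset.filter_mem_eq_inter, Finset.univ_inter]
    simpa using Finset.sum_le_card_nsmul I _ L (fun j _ => hAL 0 j)
  have hQb : Q ≤ I.card * L := by
    rw [hQ, ← Finset.sum_filter, Finset.filter_mem_eq_inter, Finset.univ_inter]
    simpa using Finset.sum_le_card_nsmul I _ L (fun j _ => hAL 1 j)
  have hRb : R ≤ I.card * M := by
    rw [hR, ← Finset.sum_filter, Finset.filter_mem_eq_inter, Finset.univ_inter]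
    simpa using Finset.sum_le_card_nsmul I _ M (fun j _ => hβM j)
  have hpar : (∑ j, β j) + P + Q = (∑ j, A 0 j) + (∑ j, A 1 j) + R := by
    rw [hP, hQ, hR, ← Finset.sum_add_distrib, ← Finset.sum_add_distrib,
      ← Finset.sum_add_distrib, ← Finset.sum_add_distrib]
    refine Finset.sum_congr rfl fun j _ => ?_
    by_cases hj : j ∈ I
    · simp only [hj, if_true]; omega
    · simp only [hj, if_false]; have := hmem j hj; omega
  obtain ⟨u, hu⟩ : ∃ u, u = P - (Q + R) := ⟨_, rfl⟩
  obtain ⟨v, hv⟩ : ∃ v, v = (Q + R) - P := ⟨_, rfl⟩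
  let B0 : Fin n → ℕ := fun j => if j = z then A 0 z + u else if j ∈ I then β j else A 0 j
  let B1 : Fin n → ℕ := fun j => if j = z then A 1 z + v else if j ∈ I then 0 else A 1 j
  have hs0 : (∑ j, B0 j) + P = (∑ j, A 0 j) + R + u := by
    have : u = ∑ j, (if j = z then u else 0) := by simp
    rw [this, hP, hR, ← Finset.sum_add_distrib, ← Finset.sum_add_distrib,
      ← Finset.sum_add_distrib]
    refine Finset.sum_congr rfl fun j _ => ?_
    by_cases hjz : j = z
    · subst hjz; simp [B0, h1]
    · by_cases hj : j ∈ I <;> simp [B0, hj, hjz]; omega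
  have hs1 : (∑ j, B1 j) + Q = (∑ j, A 1 j) + v := by
    have : v = ∑ j, (if j = z then v else 0) := by simp
    rw [this, hQ, ← Finset.sum_add_distrib, ← Finset.sum_add_distrib]
    refine Finset.sum_congr rfl fun j _ => ?_
    by_cases hjz : j = z
    · subst hjz; simp [B1, h1]
    · by_cases hj : j ∈ I <;> simp [B1, hj, hjz]
  refine ⟨![B0, B1], u + v, ?_, ?_, ?_, ?_, ?_, ?_⟩
  · simp only [Matrix.cons_val_zero, Matrix.cons_val_one]
    omega
  · intro j hj i
    simp only [Finset.mem_union, Finset.mem_singleton, not_or] at hj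
    fin_cases i <;> simp [B0, B1, hj.1, hj.2]
  · rw [Nat.even_iff] at hβeven ⊢
    omega
  · have : (2 * L + M) * (I.card + 1) = 2 * (I.card * L) + I.card * M + 2 * L + M := by ring
    omega
  · have := hmem z h1
    simp [B0, B1]
    omega
  · intro j hjz
    by_cases hj : j ∈ I
    · simp [B0, B1, hj, hjz]
    · simp [B0, B1, hj, hjz, hmem j hj]
end

section
/- Let n ≥ 1, let β = (β_1, …, β_n) be nonnegative integers, and let r be a nonnegative even integer. Let B be a 2 × n matrix with nonnegative integer entries whose two row sums are equal and whose vector of column sums is (β_1 + r, β_2, …, β_n). Then there exists a 2 × n matrix A' with nonnegative integer entries whose two row sums are equal, whose vector of column sums is exactly (β_1, …, β_n), and which differs from B in at most r + 1 columns. -/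
theorem exists_sub_sum {ι : Type*} [DecidableEq ι] (s : Finset ι) (f : ι → ℕ) :
    ∀ m, m ≤ ∑ j ∈ s, f j → ∃ g : ι → ℕ, (∀ j, g j ≤ f j) ∧ ∑ j ∈ s, g j = m := by
  induction s using Finset.induction_on with
  | empty => intro m hm; exact ⟨fun _ => 0, by simp, by simp at hm ⊢; omega⟩
  | insert a s ha ih =>
    intro m hm
    rw [Finset.sum_insert ha] at hm
    obtain ⟨g, hg, hs⟩ := ih (m - min m (f a)) (by omega)
    refine ⟨Function.update g a (min m (f a)), ?_, ?_⟩
    · intro j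
      by_cases h : j = a
      · subst h; simp
      · simp [h, hg j]
    · rw [Finset.sum_insert ha, Finset.sum_update_of_notMem ha, hs]
      simp

theorem remove_aux {n : ℕ} (z : Fin n) (β : Fin n → ℕ) (k : ℕ) (p q : Fin n → ℕ)
    (hrow : ∑ j, p j = ∑ j, q j) (hz : p z + q z = β z + (k + k))
    (hc : ∀ j, j ≠ z → p j + q j = β j) (hpq : p z ≤ q z) :
    ∃ p' q' : Fin n → ℕ, (∑ j, p' j = ∑ j, q' j) ∧ (∀ j, p' j + q' j = β j) ∧
      (Finset.univ.filter fun j => p' j ≠ p j ∨ q' j ≠ q j).card ≤ k + k + 1 := by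
  have hq : q z ≤ ∑ j, q j := Finset.single_le_sum (fun _ _ => Nat.zero_le _) (Finset.mem_univ z)
  have h1 : p z + ∑ j, (if j = z then 0 else p j) = ∑ j, p j := by
    have : p z = ∑ j, (if j = z then p j else 0) := by simp
    rw [this, ← Finset.sum_add_distrib]
    refine Finset.sum_congr rfl fun j _ => ?_
    split_ifs <;> simp
  obtain ⟨g, hg, hs⟩ := exists_sub_sum Finset.univ (fun j => if j = z then 0 else p j)
    (k - p z) (by show _ ≤ ∑ j, (if j = z then 0 else p j); omega)
  refine ⟨fun j => if j = z then p z - k else p j - g j,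
    fun j => if j = z then β z - (p z - k) else q j + g j, ?_, ?_, ?_⟩
  · have e1 : ∑ j, (if j = z then p z - k else p j - g j) + ∑ j, g j
        + ∑ j, (if j = z then min (p z) k else 0) = ∑ j, p j := by
      rw [← Finset.sum_add_distrib, ← Finset.sum_add_distrib]
      refine Finset.sum_congr rfl fun j _ => ?_
      have := hg j
      by_cases h : j = z
      · subst h; simp at this ⊢; omega
      · simp [h] at this ⊢; omega
    have e2 : ∑ j, (if j = z then β z - (p z - k) else q j + g j)
        + ∑ j, (if j = z then k + k - min (p z) k else 0) = ∑ j, q j + ∑ j, g j := by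
      rw [← Finset.sum_add_distrib, ← Finset.sum_add_distrib]
      refine Finset.sum_congr rfl fun j _ => ?_
      have := hg j
      by_cases h : j = z
      · subst h; simp at this ⊢; omega
      · simp [h] at this ⊢
    simp only [Finset.sum_ite_eq', Finset.mem_univ, if_true] at e1 e2
    beta_reduce
    omega
  · intro j
    have := hg j
    by_cases h : j = z
    · subst h; simp; omega
    · have := hc j h
      simp [h] at *; omega
  · calc _ ≤ (insert z (Finset.univ.filter fun j => g j ≠ 0)).card := by
          apply Finset.card_le_card
          intro j hj
          by_cases h : j = z
          · simp [h]
          · simp [h] at hj ⊢; omega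
      _ ≤ (Finset.univ.filter fun j => g j ≠ 0).card + 1 := Finset.card_insert_le _ _
      _ ≤ ∑ j, g j + 1 := by
          rw [Finset.card_filter]
          gcongr with j
          split_ifs <;> omega
      _ ≤ _ := by omega

/-- **Step 2: removing the even excess `r` from the first column.**
If a `2 × n` matrix `B` has equal row sums and column sums `(β_1 + r, β_2, …, β_n)`
with `r` even, then there is a `2 × n` matrix `A'` with equal row sums, column sums
exactly `β`, differing from `B` in at most `r + 1` columns. -/
theorem remove_excess_from_first_column (n : ℕ) (hn : 0 < n)
    (β : Fin n → ℕ) (r : ℕ) (hr : Even r)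
    (B : Fin 2 → Fin n → ℕ)
    (hBrow : ∑ j, B 0 j = ∑ j, B 1 j)
    (hBcol1 : B 0 ⟨0, hn⟩ + B 1 ⟨0, hn⟩ = β ⟨0, hn⟩ + r)
    (hBcol : ∀ j, j ≠ (⟨0, hn⟩ : Fin n) → B 0 j + B 1 j = β j) :
    ∃ A' : Fin 2 → Fin n → ℕ,
      (∑ j, A' 0 j = ∑ j, A' 1 j) ∧
      (∀ j, A' 0 j + A' 1 j = β j) ∧
      (Finset.univ.filter fun j : Fin n => ∃ i, A' i j ≠ B i j).card ≤ r + 1 := by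
  obtain ⟨k, rfl⟩ := hr
  rcases le_total (B 0 ⟨0, hn⟩) (B 1 ⟨0, hn⟩) with h | h
  · obtain ⟨p, q, h1, h2, h3⟩ := remove_aux ⟨0, hn⟩ β k (B 0) (B 1) hBrow hBcol1 hBcol h
    refine ⟨![p, q], by simpa using h1, by simpa using h2, ?_⟩
    simpa [Fin.exists_fin_two] using h3
  · obtain ⟨p, q, h1, h2, h3⟩ := remove_aux ⟨0, hn⟩ β k (B 1) (B 0) hBrow.symm
      (by omega) (fun j hj => by have := hBcol j hj; omega) h
    refine ⟨![q, p], by simpa using h1.symm, fun j => by simpa [add_comm] using h2 j, ?_⟩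
    simpa [Fin.exists_fin_two, or_comm] using h3
end

section
/- Let p, m be nonnegative integers with p + m ≥ 1, let n ≥ 1, let A ∈ 𝔇(p, m, n), and let β = (β_1, …, β_n) be nonnegative integers with Σ_{j=1}^n β_j even. Set I = {j : β_j ≠ (deg A)_j} and assume |I| < n. Partition the rows of A into p + m blocks: for 1 ≤ i ≤ p, block i consists of row i alone; for p < i ≤ p + m, block i consists of the two rows p + 2(i − p) − 1 and p + 2(i − p). For each block i and column j, let d^{(i)}_j denote the sum of the entries of block i in column j. Then there exist vectors β^{(1)}, …, β^{(p+m)} of nonnegative integers of length n such that: (a) Σ_{i=1}^{p+m} β^{(i)}_j = β_j for every j; (b) Σ_{j=1}^n β^{(i)}_j is even for every i; (c) for every i with 2 ≤ i ≤ p + m, β^{(i)}_j = d^{(i)}_j for all j outside a set of size at most |I| + 1; and (d) β^{(1)}_j = d^{(1)}_j for all j outside a set of size at most |I| + p + m − 1. -/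
theorem row_fix {n : ℕ} (I : Finset (Fin n)) (d : Fin n → ℕ) :
    ∃ (r : Fin n → ℕ) (S : Finset (Fin n)), S.card ≤ 1 ∧ (∀ j ∈ I, r j = 0) ∧
      (∀ j, r j ≤ d j) ∧ (∀ j, j ∉ I ∪ S → r j = d j) ∧ Even (∑ j, r j) := by
  set r0 : Fin n → ℕ := fun j => if j ∈ I then 0 else d j with hr0
  by_cases h : Even (∑ j, r0 j)
  · refine ⟨r0, ∅, by simp, fun j hj => by simp [hr0, hj], fun j => ?_, fun j hj => ?_, h⟩
    · simp only [hr0]; split_ifs <;> omega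
    · have : j ∉ I := by simpa using hj
      simp [hr0, this]
  · have : ∃ c, r0 c ≠ 0 := by
      by_contra! hc
      exact h (by simp [hc])
    obtain ⟨c, hc⟩ := this
    have hcI : c ∉ I := fun hI => hc (by simp [hr0, hI])
    refine ⟨fun j => if j = c then r0 j - 1 else r0 j, {c}, by simp, fun j hj => ?_,
      fun j => ?_, fun j hj => ?_, ?_⟩
    · simp [hr0, hj]
    · simp only [hr0]; split_ifs <;> omega
    · simp only [Finset.mem_union, Finset.mem_singleton, not_or] at hj
      simp [hr0, hj.1, hj.2]
    · have e : ∑ j, r0 j = (∑ j, if j = c then r0 j - 1 else r0 j) + 1 := by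
        have : ∑ j, r0 j = ∑ j, ((if j = c then r0 j - 1 else r0 j) + if j = c then 1 else 0) := by
          apply Finset.sum_congr rfl
          intro j _
          split_ifs with hj
          · subst hj; omega
          · rfl
        rw [this, Finset.sum_add_distrib]; simp
      rw [e] at h
      simpa [Nat.even_add_one] using h

theorem split_abstract {N n : ℕ} (i0 : Fin N) (d : Fin N → Fin n → ℕ) (β : Fin n → ℕ)
    (hβ : Even (∑ j, β j)) (I : Finset (Fin n)) (hI : ∀ j, j ∉ I → ∑ i, d i j = β j) :
    ∃ βv : Fin N → Fin n → ℕ,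
      (∀ j, ∑ i, βv i j = β j) ∧ (∀ i, Even (∑ j, βv i j)) ∧
      (∀ i, i ≠ i0 → (Finset.univ.filter fun j => βv i j ≠ d i j).card ≤ I.card + 1) ∧
      (Finset.univ.filter fun j => βv i0 j ≠ d i0 j).card ≤ I.card + (N - 1) := by
  choose r S hS hr0 hrd hre hev using fun i => row_fix I (d i)
  set T : Finset (Fin N) := Finset.univ.erase i0 with hT
  have hsplit : ∀ f : Fin N → ℕ, ∑ i, f i = f i0 + ∑ i ∈ T, f i := fun f =>
    (Finset.add_sum_erase _ _ (Finset.mem_univ i0)).symm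
  have hle : ∀ j, ∑ i ∈ T, r i j ≤ β j := by
    intro j
    by_cases hj : j ∈ I
    · rw [Finset.sum_eq_zero (fun i _ => hr0 i j hj)]; omega
    · rw [← hI j hj, hsplit]
      have := Finset.sum_le_sum (s := T) (fun i _ => hrd i j)
      omega
  have hne : ∀ i ∈ T, i ≠ i0 := fun i hi => Finset.ne_of_mem_erase hi
  set b : Fin N → Fin n → ℕ := fun i j => if i = i0 then β j - ∑ i ∈ T, r i j else r i j with hb
  have hb0 : ∀ j, b i0 j = β j - ∑ i ∈ T, r i j := fun j => by simp [hb]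
  have hb1 : ∀ i, i ≠ i0 → ∀ j, b i j = r i j := fun i hi j => by simp [hb, hi]
  have hcol : ∀ j, ∑ i, b i j = β j := by
    intro j
    rw [hsplit, hb0, Finset.sum_congr rfl (fun i hi => hb1 i (hne i hi) j)]
    have := hle j
    omega
  have hev1 : ∀ i, i ≠ i0 → Even (∑ j, b i j) := by
    intro i hi
    rw [Finset.sum_congr rfl (fun j _ => hb1 i hi j)]
    exact hev i
  refine ⟨b, hcol, ?_, ?_, ?_⟩
  · intro i
    by_cases hi : i = i0
    · subst hi
      have e : ∑ j, β j = ∑ j, b i j + ∑ i ∈ T, ∑ j, b i j := by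
        rw [← hsplit (fun i => ∑ j, b i j), Finset.sum_comm]
        exact Finset.sum_congr rfl (fun j _ => (hcol j).symm)
      rw [e, Nat.even_add] at hβ
      exact hβ.2 (Finset.even_sum _ (fun k hk => hev1 k (hne k hk)))
    · exact hev1 i hi
  · intro i hi
    calc _ ≤ (I ∪ S i).card := by
          apply Finset.card_le_card
          intro j hj
          by_contra hc
          simp only [Finset.mem_filter, Finset.mem_univ, true_and] at hj
          exact hj ((hb1 i hi j).trans (hre i j hc))
      _ ≤ I.card + (S i).card := Finset.card_union_le _ _
      _ ≤ _ := by have := hS i; omega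
  · calc _ ≤ (I ∪ T.biUnion S).card := by
          apply Finset.card_le_card
          intro j hj
          by_contra hc
          simp only [Finset.mem_filter, Finset.mem_univ, true_and] at hj
          simp only [Finset.mem_union, Finset.mem_biUnion, not_or, not_exists, not_and] at hc
          apply hj
          rw [hb0, ← hI j hc.1, hsplit,
            Finset.sum_congr rfl (fun i hi => hre i j (by simp [hc.1, hc.2 i hi]))]
          omega
      _ ≤ I.card + (T.biUnion S).card := Finset.card_union_le _ _
      _ ≤ I.card + T.card * 1 := by
          have := Finset.card_biUnion_le_card_mul T S 1 (fun i _ => hS i)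
          omega
      _ = _ := by simp [hT]

theorem sum_range_pairs (f : ℕ → ℕ) (m : ℕ) :
    ∑ k ∈ Finset.range (2 * m), f k = ∑ k ∈ Finset.range m, (f (2 * k) + f (2 * k + 1)) := by
  induction m with
  | zero => simp
  | succ m ih =>
    rw [Nat.mul_succ, Finset.sum_range_succ, Finset.sum_range_succ, ih, Finset.sum_range_succ]
    omega

theorem block_sum (p m : ℕ) (a : Fin (p + 2 * m) → ℕ) (e : Fin (p + m) → ℕ)
    (h1 : ∀ (i : Fin (p + m)) (hi : (i : ℕ) < p), e i = a ⟨i, by omega⟩)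
    (h2 : ∀ (i : Fin (p + m)) (hi : p ≤ (i : ℕ)),
      e i = a ⟨p + 2 * ((i : ℕ) - p), by have := i.isLt; omega⟩
            + a ⟨p + 2 * ((i : ℕ) - p) + 1, by have := i.isLt; omega⟩) :
    ∑ i, e i = ∑ i, a i := by
  set f : ℕ → ℕ := fun k => if h : k < p + 2 * m then a ⟨k, h⟩ else 0 with hf
  have hfa : ∀ k (h : k < p + 2 * m), a ⟨k, h⟩ = f k := fun k h => by simp [hf, h]
  have ha : ∑ i, a i = ∑ k ∈ Finset.range (p + 2 * m), f k := by
    rw [← Fin.sum_univ_eq_sum_range]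
    exact Finset.sum_congr rfl (fun i _ => hfa i i.isLt)
  rw [ha, Finset.sum_range_add, sum_range_pairs (fun x => f (p + x)), Fin.sum_univ_add,
    ← Fin.sum_univ_eq_sum_range, ← Fin.sum_univ_eq_sum_range]
  congr 1
  · apply Finset.sum_congr rfl
    intro i _
    rw [h1 _ (by simp), hfa]; simp
  · apply Finset.sum_congr rfl
    intro i _
    rw [h2 _ (by simp), hfa, hfa]; simp [add_assoc]

/-- **Splitting the target degrees among the blocks.**
The rows of `A ∈ 𝔇(p, m, n)` are partitioned into `p + m` blocks (0-based: block `i`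
with `i < p` is row `i` alone; block `i` with `p ≤ i < p + m` consists of the two
rows `p + 2(i - p)` and `p + 2(i - p) + 1`); `d i j` is the sum of the entries of
block `i` in column `j`. Then the target degree vector `β` (with even total sum and
disagreement set `I = {j : β j ≠ (deg A)_j}` with `|I| < n`) may be split into
nonnegative vectors `β⁽⁰⁾, …, β⁽ᵖ⁺ᵐ⁻¹⁾` summing columnwise to `β`, each with even
total sum, each with `i ≥ 1` agreeing with the block degrees `d i` outside a set of
at most `|I| + 1` columns, and `β⁽⁰⁾` agreeing with `d 0` outside a set of at most
`|I| + p + m - 1` columns. -/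
theorem split_target_degrees_into_blocks (p m n : ℕ) (hpm : 1 ≤ p + m) (hn : 1 ≤ n)
    (A : Fin (p + 2 * m) → Fin n → ℕ) (hA : memD p m n A)
    (β : Fin n → ℕ) (hβeven : Even (∑ j, β j))
    (I : Finset (Fin n)) (hI : I = Finset.univ.filter fun j => β j ≠ colSum A j)
    (hIn : I.card < n)
    (d : Fin (p + m) → Fin n → ℕ)
    (hd1 : ∀ (i : Fin (p + m)) (hi : (i : ℕ) < p) (j : Fin n),
      d i j = A ⟨i, by omega⟩ j)
    (hd2 : ∀ (i : Fin (p + m)) (hi : p ≤ (i : ℕ)) (j : Fin n),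
      d i j = A ⟨p + 2 * ((i : ℕ) - p), by have := i.isLt; omega⟩ j
            + A ⟨p + 2 * ((i : ℕ) - p) + 1, by have := i.isLt; omega⟩ j) :
    ∃ βv : Fin (p + m) → Fin n → ℕ,
      (∀ j, ∑ i, βv i j = β j) ∧
      (∀ i, Even (∑ j, βv i j)) ∧
      (∀ i : Fin (p + m), 1 ≤ (i : ℕ) →
        (Finset.univ.filter fun j : Fin n => βv i j ≠ d i j).card ≤ I.card + 1) ∧
      (Finset.univ.filter
          fun j : Fin n => βv ⟨0, hpm⟩ j ≠ d ⟨0, hpm⟩ j).card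
        ≤ I.card + p + m - 1 := by
  have hcol : ∀ j, j ∉ I → ∑ i, d i j = β j := by
    intro j hj
    have hb : β j = colSum A j := by
      by_contra hc
      exact hj (by simp [hI, hc])
    rw [hb]
    exact block_sum p m (fun i => A i j) (fun i => d i j)
      (fun i hi => hd1 i hi j) (fun i hi => hd2 i hi j)
  obtain ⟨b, h1, h2, h3, h4⟩ := split_abstract ⟨0, hpm⟩ d β hβeven I hcol
  refine ⟨b, h1, h2, fun i hi => h3 i ?_, ?_⟩
  · rintro rfl
    simp at hi
  · omega
end
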